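/- arXiv:2501.10102 — 4 statements merged into one kernel-verified Lean document; each statement's English description precedes it below -/
import Mathlib

section
/- Let k ≥ 5 be odd and consider arrangements of Fin (k+1). Define B₀ = C(id), B₁ = C(L(B₀)), B_j = C(R(B_{j−1})) for 2 ≤ j ≤ k−1, and B_k = C(L(B_{k−1})). Then the first entries B₀(0), B₁(0), …, B_k(0) are pairwise distinct; equivalently, {B_j(0) : 0 ≤ j ≤ k} = Fin (k+1). -/
/-- `cyc i j` is the permutation of positions with `i ↦ j`, `p ↦ p - 1` for `i < p ≤ j`,
and every other position fixed (the cycle `(j, j-1, …, i)`). -/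
def cyc {n : ℕ} (i j : Fin n) : Equiv.Perm (Fin n) :=
  (((List.finRange n).filter (fun p => decide (i ≤ p ∧ p ≤ j))).reverse).formPerm

/-- The move `C` on arrangements of `Fin (k+1)`: exchange the entries at positions 1 and 2. -/
def Cmove (k : ℕ) (a : Equiv.Perm (Fin (k + 1))) : Equiv.Perm (Fin (k + 1)) :=
  if h : 2 < k + 1 then (Equiv.swap ⟨1, by omega⟩ ⟨2, h⟩).trans a else a

/-- The move `L` on arrangements of `Fin (k+1)`: exchange the entries at positions 0 and 1. -/
def Lmove (k : ℕ) (a : Equiv.Perm (Fin (k + 1))) : Equiv.Perm (Fin (k + 1)) :=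
  if h : 1 < k + 1 then (Equiv.swap ⟨0, by omega⟩ ⟨1, h⟩).trans a else a

/-- The move `R` on arrangements of `Fin (k+1)`: move the entry at position `k` to
position 0, shifting the entries at positions `0, …, k-1` one position to the right. -/
def Rmove (k : ℕ) (a : Equiv.Perm (Fin (k + 1))) : Equiv.Perm (Fin (k + 1)) :=
  (cyc (⟨0, by omega⟩ : Fin (k + 1)) ⟨k, by omega⟩).trans a

/-! The composite `C ∘ R` keeps the entry at position 1 and cyclically rotates the `k` other
entries, whose positions `Fin.succAbove 1` numbers by the cyclic group `Fin k`. So the first entries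
of `B₁, …, B_{k-1}` are the entries of `B₁` at every position other than 1, save the one that one
more rotation would bring to the front. That entry stands at position 2 of `B₁ = C(L(B₀))`, so it is
`B₀(0)`; and the entry kept at position 1 becomes `B_k(0)` in the final `L`. Every item thus occurs
as a first entry, and by counting each occurs exactly once. -/

section Moves

variable {n : ℕ}

lemma Cmove_apply (a : Equiv.Perm (Fin (n + 3))) (i : Fin (n + 3)) :
    Cmove (n + 2) a i = a (Equiv.swap 1 2 i) := by
  rw [Cmove, dif_pos (by omega)]
  rfl

lemma Lmove_apply (a : Equiv.Perm (Fin (n + 2))) (i : Fin (n + 2)) :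
    Lmove (n + 1) a i = a (Equiv.swap 0 1 i) := by
  rw [Lmove, dif_pos (by omega)]
  rfl

lemma formPerm_finRange (n : ℕ) : (List.finRange n).formPerm = finRotate n := by
  ext i
  have : NeZero n := i.neZero
  have h := List.formPerm_apply_getElem (List.finRange n) (List.nodup_finRange n) i (by simp)
  simp only [List.getElem_finRange, Fin.cast_mk, List.length_finRange] at h
  rw [h, finRotate_apply]
  simp [Fin.val_add]

lemma cyc_zero_last (k : ℕ) : cyc (0 : Fin (k + 1)) (Fin.last k) = (finRotate (k + 1))⁻¹ := by
  have hfilter : (List.finRange (k + 1)).filter (fun p => decide (0 ≤ p ∧ p ≤ Fin.last k)) =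
      List.finRange (k + 1) :=
    List.filter_eq_self.2 fun p _ => decide_eq_true ⟨Fin.zero_le p, Fin.le_last p⟩
  rw [cyc, hfilter, List.formPerm_reverse, formPerm_finRange]

lemma Rmove_apply_add_one {k : ℕ} (a : Equiv.Perm (Fin (k + 1))) (i : Fin (k + 1)) :
    Rmove k a (i + 1) = a i := by
  change a (cyc 0 (Fin.last k) (i + 1)) = a i
  rw [cyc_zero_last, ← finRotate_apply]
  exact congrArg a ((finRotate (k + 1)).symm_apply_apply i)

/-- The composite move `C ∘ R` by which `B_j` arises from `B_{j-1}` for `2 ≤ j ≤ k - 1`. -/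
def CRmove (k : ℕ) (a : Equiv.Perm (Fin (k + 1))) : Equiv.Perm (Fin (k + 1)) :=
  Cmove k (Rmove k a)

lemma swap_one_two_apply_zero : Equiv.swap (1 : Fin (n + 3)) 2 0 = 0 :=
  Equiv.swap_apply_of_ne_of_ne Fin.zero_ne_one (Fin.succ_ne_zero 1).symm

lemma swap_succAbove_one_add_one (i : Fin (n + 2)) :
    Equiv.swap 1 2 ((1 : Fin (n + 3)).succAbove (i + 1)) = (1 : Fin (n + 3)).succAbove i + 1 := by
  obtain ⟨i, rfl⟩ | rfl := Fin.eq_castSucc_or_eq_last i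
  · cases i using Fin.cases with
    | zero => simp
    | succ i =>
      rw [Fin.coeSucc_eq_succ, Fin.one_succAbove_succ, ← Fin.succ_castSucc, Fin.one_succAbove_succ,
        Fin.succ_castSucc, Fin.succ_castSucc, Fin.coeSucc_eq_succ]
      refine Equiv.swap_apply_of_ne_of_ne (Fin.succ_succ_ne_one _) fun h => ?_
      exact Fin.succ_succ_ne_one _ (Fin.succ_injective _ h)
  · have hone : (1 : Fin (n + 3)) ≠ Fin.last (n + 2) := by simp [Fin.ext_iff]
    rw [Fin.last_add_one, Fin.one_succAbove_zero, Fin.succAbove_ne_last_last hone,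
      Fin.last_add_one, swap_one_two_apply_zero]

lemma CRmove_apply_one (a : Equiv.Perm (Fin (n + 3))) : CRmove (n + 2) a 1 = a 1 := by
  rw [CRmove, Cmove_apply, Equiv.swap_apply_left]
  exact Rmove_apply_add_one a 1

lemma CRmove_apply_succAbove (a : Equiv.Perm (Fin (n + 3))) (i : Fin (n + 2)) :
    CRmove (n + 2) a (Fin.succAbove 1 (i + 1)) = a (Fin.succAbove 1 i) := by
  rw [CRmove, Cmove_apply, swap_succAbove_one_add_one, Rmove_apply_add_one]

lemma CRmove_iterate_apply_one (j : ℕ) (a : Equiv.Perm (Fin (n + 3))) :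
    (CRmove (n + 2))^[j] a 1 = a 1 := by
  induction j with
  | zero => rfl
  | succ j ih => rw [Function.iterate_succ_apply', CRmove_apply_one, ih]

open Fin.NatCast in
lemma CRmove_iterate_apply_succAbove (j : ℕ) (a : Equiv.Perm (Fin (n + 3))) (i : Fin (n + 2)) :
    (CRmove (n + 2))^[j] a (Fin.succAbove 1 (i + j)) = a (Fin.succAbove 1 i) := by
  induction j with
  | zero => simp
  | succ j ih =>
    have hcast : i + (j + 1 : ℕ) = i + j + 1 := by simp [add_assoc]
    rw [Function.iterate_succ_apply', hcast, CRmove_apply_succAbove, ih]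

lemma Cmove_Lmove_apply_two (b : Equiv.Perm (Fin (n + 3))) :
    Cmove (n + 2) (Lmove (n + 2) b) 2 = b 0 := by
  rw [Cmove_apply, Equiv.swap_apply_right, Lmove_apply, Equiv.swap_apply_right]

lemma Cmove_Lmove_apply_zero (b : Equiv.Perm (Fin (n + 3))) :
    Cmove (n + 2) (Lmove (n + 2) b) 0 = b 1 := by
  rw [Cmove_apply, swap_one_two_apply_zero, Lmove_apply, Equiv.swap_apply_left]

lemma apply_two_or_apply_one_or_exists_CRmove_iterate_apply_zero
    (a : Equiv.Perm (Fin (n + 3))) (v : Fin (n + 3)) :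
    a 2 = v ∨ a 1 = v ∨ ∃ j ≤ n, (CRmove (n + 2))^[j] a 0 = v := by
  obtain ⟨p, rfl⟩ := a.surjective v
  obtain rfl | ⟨i, rfl⟩ := Fin.eq_self_or_eq_succAbove 1 p
  · exact .inr (.inl rfl)
  have hrotate : (CRmove (n + 2))^[(-i).val] a 0 = a (Fin.succAbove 1 i) := by
    simpa using CRmove_iterate_apply_succAbove (-i).val a i
  obtain hj | hj := (Fin.is_le (-i)).lt_or_eq
  · exact .inr (.inr ⟨_, Nat.le_of_lt_succ hj, hrotate⟩)
  · have hi : i = 1 := by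
      rw [← neg_neg i, Fin.ext (b := Fin.last (n + 1)) hj, Fin.neg_last]
    exact .inl (by rw [hi, Fin.one_succAbove_one])

end Moves

theorem first_entries_distinct_general (k : ℕ) (hk : 2 ≤ k)
    (B : ℕ → Equiv.Perm (Fin (k + 1)))
    (hB1 : B 1 = Cmove k (Lmove k (B 0)))
    (hBj : ∀ j : ℕ, 2 ≤ j → j ≤ k - 1 → B j = Cmove k (Rmove k (B (j - 1))))
    (hBk : B k = Cmove k (Lmove k (B (k - 1)))) :
    (∀ j₁ j₂ : ℕ, j₁ ≤ k → j₂ ≤ k →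
      B j₁ ⟨0, by omega⟩ = B j₂ ⟨0, by omega⟩ → j₁ = j₂) ∧
    (∀ v : Fin (k + 1), ∃ j : ℕ, j ≤ k ∧ B j ⟨0, by omega⟩ = v) := by
  obtain ⟨n, rfl⟩ := Nat.exists_eq_add_of_le' hk
  have hiterate : ∀ j ≤ n, B (j + 1) = (CRmove (n + 2))^[j] (B 1) := by
    intro j hj
    induction j with
    | zero => rfl
    | succ j ih =>
      rw [Function.iterate_succ_apply', ← ih (by omega)]
      exact hBj (j + 2) (by omega) (by omega)
  have hlast : B (n + 2) 0 = B 1 1 := by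
    rw [hBk, Cmove_Lmove_apply_zero, Nat.add_succ_sub_one, hiterate n le_rfl,
      CRmove_iterate_apply_one]
  have hsurj : ∀ v, ∃ j ≤ n + 2, B j 0 = v := by
    intro v
    obtain h | h | ⟨j, hj, h⟩ :=
      apply_two_or_apply_one_or_exists_CRmove_iterate_apply_zero (B 1) v
    · exact ⟨0, by omega, by rw [← h, hB1, Cmove_Lmove_apply_two]⟩
    · exact ⟨n + 2, le_rfl, hlast.trans h⟩
    · exact ⟨j + 1, by omega, by rw [hiterate j hj, h]⟩
  have hinj : Function.Injective fun j : Fin (n + 3) => B j 0 := by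
    refine Finite.injective_iff_surjective.2 fun v => ?_
    obtain ⟨j, hj, h⟩ := hsurj v
    exact ⟨⟨j, by omega⟩, h⟩
  refine ⟨fun j₁ j₂ h₁ h₂ h => ?_, hsurj⟩
  exact congrArg Fin.val (@hinj ⟨j₁, by omega⟩ ⟨j₂, by omega⟩ h)

/-- For odd `k ≥ 5`, let `B₀ = C(id)`, `B₁ = C(L(B₀))`, `B_j = C(R(B_{j-1}))` for
`2 ≤ j ≤ k - 1`, and `B_k = C(L(B_{k-1}))`.  Then the first entries `B₀ 0, B₁ 0, …, B_k 0`
are pairwise distinct; equivalently, they exhaust all of `Fin (k+1)`. -/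
theorem first_entries_distinct (k : ℕ) (hk : 5 ≤ k) (hodd : Odd k)
    (B : ℕ → Equiv.Perm (Fin (k + 1)))
    (hB0 : B 0 = Cmove k 1)
    (hB1 : B 1 = Cmove k (Lmove k (B 0)))
    (hBj : ∀ j : ℕ, 2 ≤ j → j ≤ k - 1 → B j = Cmove k (Rmove k (B (j - 1))))
    (hBk : B k = Cmove k (Lmove k (B (k - 1)))) :
    (∀ j₁ j₂ : ℕ, j₁ ≤ k → j₂ ≤ k →
      B j₁ ⟨0, by omega⟩ = B j₂ ⟨0, by omega⟩ → j₁ = j₂) ∧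
    (∀ v : Fin (k + 1), ∃ j : ℕ, j ≤ k ∧ B j ⟨0, by omega⟩ = v) :=
  first_entries_distinct_general k (by omega) B hB1 hBj hBk
end

section
/- Let k ≥ 6 be even, let π be the position permutation of Fin (k+1) defined by π(0) = 1, π(1) = 2, π(2) = 5, π(3) = 4, π(p) = p+2 for 4 ≤ p ≤ k−2, π(k−1) = 3, π(k) = 0, and let A₀ : Fin (k+1) → Fin (k+1) be the arrangement (0,2,5,4,6,7,…,k,3,1), i.e., A₀(0) = 0, A₀(1) = 2, A₀(2) = 5, A₀(3) = 4, A₀(j) = j+2 for 4 ≤ j ≤ k−2, A₀(k−1) = 3, A₀(k) = 1. Then the first entries (A₀ ∘ π^j)(0) for j = 0, 1, …, k are pairwise distinct; equivalently they exhaust all of Fin (k+1). -/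
/-!
For `k = 2 * m` the position permutation is the single cycle
`0 → 1 → 2 → 5 → 7 → ⋯ → k - 1 → 3 → 4 → 6 → ⋯ → k → 0`: from 5 on it climbs through the
odd positions, and as `k - 1` is odd this climb ends with the jump to 3, which leads on to the
even positions. So the first `k + 1` iterates of any position are all the positions, once each,
and a bijective labelling of the positions preserves this.
-/

theorem isCycleOn_univ_of_forall_sameCycle {α : Type*} {f : Equiv.Perm α} (a : α)
    (h : ∀ x, f.SameCycle a x) : f.IsCycleOn Set.univ :=
  ⟨f.bijective.bijOn_univ, fun x _ y _ => (h x).symm.trans (h y)⟩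

theorem bijOn_pow_apply_of_isCycleOn {α : Type*} {f : Equiv.Perm α} {s : Finset α} {a : α}
    (hf : f.IsCycleOn s) (ha : a ∈ s) :
    Set.BijOn (fun j : ℕ => (f ^ j) a) (Set.Iio s.card) s := by
  refine ⟨fun j _ => (hf.1.perm_pow j).mapsTo ha, fun i hi j hj hij => ?_, fun b hb => ?_⟩
  · exact ((hf.pow_apply_eq_pow_apply ha).1 hij).eq_of_lt_of_lt hi hj
  · exact hf.exists_pow_eq ha hb

theorem sameCycle_add_mul {n a d : ℕ} {f : Equiv.Perm (Fin n)}
    (hf : ∀ p, a ≤ p → ∀ h : p + d < n, f ⟨p, by omega⟩ = ⟨p + d, h⟩) (i : ℕ)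
    (h : a + d * i < n) : f.SameCycle ⟨a, by omega⟩ ⟨a + d * i, h⟩ := by
  induction i with
  | zero => exact .refl f _
  | succ i ih =>
    simp only [mul_add_one, ← add_assoc] at h ⊢
    exact hf _ (by omega) h ▸ (ih (by omega)).apply_right

theorem leftCall_isCycleOn_univ {m : ℕ} (hm : 3 ≤ m) {π : Equiv.Perm (Fin (2 * m + 1))}
    (h0 : π ⟨0, by omega⟩ = ⟨1, by omega⟩)
    (h1 : π ⟨1, by omega⟩ = ⟨2, by omega⟩)
    (h2 : π ⟨2, by omega⟩ = ⟨5, by omega⟩)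
    (h3 : π ⟨3, by omega⟩ = ⟨4, by omega⟩)
    (hp : ∀ p, 4 ≤ p → ∀ h : p + 2 < 2 * m + 1, π ⟨p, by omega⟩ = ⟨p + 2, h⟩)
    (hlast : π ⟨2 * m - 1, by omega⟩ = ⟨3, by omega⟩) :
    π.IsCycleOn Set.univ := by
  have reach_one := h0 ▸ (Equiv.Perm.SameCycle.refl π ⟨0, by omega⟩).apply_right
  have reach_two := h1 ▸ reach_one.apply_right
  have reach_five := h2 ▸ reach_two.apply_right
  have reach_odd (i : ℕ) (hi : 5 + 2 * i < 2 * m + 1) : π.SameCycle ⟨0, by omega⟩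
      ⟨5 + 2 * i, hi⟩ :=
    reach_five.trans (sameCycle_add_mul (fun p _ => hp p (by omega)) i hi)
  have reach_last_odd : π.SameCycle ⟨0, by omega⟩ ⟨2 * m - 1, by omega⟩ := by
    convert reach_odd (m - 3) (by omega) using 2
    omega
  have reach_three := hlast ▸ reach_last_odd.apply_right
  have reach_four := h3 ▸ reach_three.apply_right
  have reach_even (i : ℕ) (hi : 4 + 2 * i < 2 * m + 1) : π.SameCycle ⟨0, by omega⟩
      ⟨4 + 2 * i, hi⟩ :=
    reach_four.trans (sameCycle_add_mul hp i hi)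
  refine isCycleOn_univ_of_forall_sameCycle ⟨0, by omega⟩ fun ⟨p, hlt⟩ => ?_
  obtain hsmall | ⟨i, rfl⟩ | ⟨i, rfl⟩ :
      p < 4 ∨ (∃ i, p = 4 + 2 * i) ∨ ∃ i, p = 5 + 2 * i := by
    obtain ⟨i, hi⟩ := p.even_or_odd'
    by_cases hsmall : p < 4
    · exact .inl hsmall
    · exact .inr (hi.imp (fun _ => ⟨i - 2, by omega⟩) fun _ => ⟨i - 2, by omega⟩)
  · interval_cases p
    exacts [.refl π _, reach_one, reach_two, reach_three]
  · exact reach_even i hlt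
  · exact reach_odd i hlt

theorem first_entries_distinct_even_general {m : ℕ} (hm : 3 ≤ m) {π : Equiv.Perm (Fin (2 * m + 1))}
    (h0 : π ⟨0, by omega⟩ = ⟨1, by omega⟩)
    (h1 : π ⟨1, by omega⟩ = ⟨2, by omega⟩)
    (h2 : π ⟨2, by omega⟩ = ⟨5, by omega⟩)
    (h3 : π ⟨3, by omega⟩ = ⟨4, by omega⟩)
    (hp : ∀ p, 4 ≤ p → ∀ h : p + 2 < 2 * m + 1, π ⟨p, by omega⟩ = ⟨p + 2, h⟩)
    (hlast : π ⟨2 * m - 1, by omega⟩ = ⟨3, by omega⟩)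
    {α : Type*} (A : Fin (2 * m + 1) ≃ α) (x : Fin (2 * m + 1)) :
    Set.BijOn (fun j : ℕ => A ((π ^ j) x)) (Set.Iic (2 * m)) Set.univ := by
  have hcycle : π.IsCycleOn (Finset.univ : Finset (Fin (2 * m + 1))) := by
    simpa only [Finset.coe_univ] using leftCall_isCycleOn_univ hm h0 h1 h2 h3 hp hlast
  have horbit : Set.BijOn (fun j : ℕ => (π ^ j) x) (Set.Iic (2 * m)) Set.univ := by
    simpa only [Finset.card_univ, Fintype.card_fin, Finset.coe_univ,
      Set.Iio_add_one_eq_Iic] using bijOn_pow_apply_of_isCycleOn hcycle (Finset.mem_univ x)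
  exact A.bijective.bijOn_univ.comp horbit

/-- For even `k ≥ 6`, let `π` be the position permutation of `Fin (k+1)` with `π 0 = 1`,
`π 1 = 2`, `π 2 = 5`, `π 3 = 4`, `π p = p + 2` for `4 ≤ p ≤ k - 2`, `π (k-1) = 3`,
`π k = 0`, and let `A₀` be the arrangement `(0,2,5,4,6,7,…,k,3,1)`.  Then the first
entries `(A₀ ∘ π^j) 0` for `j = 0, 1, …, k` are pairwise distinct; equivalently, they
exhaust all of `Fin (k+1)`. -/
theorem first_entries_distinct_even (k : ℕ) (hk : 6 ≤ k) (hke : Even k)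
    (π : Equiv.Perm (Fin (k + 1)))
    (h0 : π ⟨0, by omega⟩ = ⟨1, by omega⟩)
    (h1 : π ⟨1, by omega⟩ = ⟨2, by omega⟩)
    (h2 : π ⟨2, by omega⟩ = ⟨5, by omega⟩)
    (h3 : π ⟨3, by omega⟩ = ⟨4, by omega⟩)
    (hp : ∀ p : ℕ, ∀ _h4 : 4 ≤ p, ∀ _hp : p ≤ k - 2,
      π ⟨p, by omega⟩ = ⟨p + 2, by omega⟩)
    (hk1 : π ⟨k - 1, by omega⟩ = ⟨3, by omega⟩)
    (hkk : π ⟨k, by omega⟩ = ⟨0, by omega⟩)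
    (A₀ : Equiv.Perm (Fin (k + 1)))
    (hA0 : A₀ ⟨0, by omega⟩ = ⟨0, by omega⟩)
    (hA1 : A₀ ⟨1, by omega⟩ = ⟨2, by omega⟩)
    (hA2 : A₀ ⟨2, by omega⟩ = ⟨5, by omega⟩)
    (hA3 : A₀ ⟨3, by omega⟩ = ⟨4, by omega⟩)
    (hAj : ∀ j : ℕ, ∀ _h4 : 4 ≤ j, ∀ _hj : j ≤ k - 2,
      A₀ ⟨j, by omega⟩ = ⟨j + 2, by omega⟩)
    (hAk1 : A₀ ⟨k - 1, by omega⟩ = ⟨3, by omega⟩)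
    (hAk : A₀ ⟨k, by omega⟩ = ⟨1, by omega⟩) :
    (∀ j₁ j₂ : ℕ, j₁ ≤ k → j₂ ≤ k →
      A₀ ((π ^ j₁) ⟨0, by omega⟩) = A₀ ((π ^ j₂) ⟨0, by omega⟩) → j₁ = j₂) ∧
    (∀ v : Fin (k + 1), ∃ j : ℕ, j ≤ k ∧ A₀ ((π ^ j) ⟨0, by omega⟩) = v) := by
  obtain ⟨m, rfl⟩ := hke.two_dvd
  have hbij := first_entries_distinct_even_general (by omega) h0 h1 h2 h3
    (fun p h4 h => hp p h4 (by omega)) hk1 A₀ ⟨0, by omega⟩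
  exact ⟨fun _ _ hj₁ hj₂ h => hbij.injOn hj₁ hj₂ h, fun v => hbij.surjOn (Set.mem_univ v)⟩
end

section
/- Define D : ℕ → ℤ by D(1) = 0 and, for k ≥ 2, D(k) = k·D(k−1) + (k−3)·(k−1) + 2 if k is even and D(k) = k·D(k−1) + (k−1) if k is odd. Then for every n ≥ 1, the sum of the Kendall tau distances between consecutive entries of the list Gen(n) equals D(n). -/
/-- `left_i`: exchange the entries at positions `i` and `i+1`. -/
def leftMove (n i : ℕ) (a : Equiv.Perm (Fin n)) : Equiv.Perm (Fin n) :=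
  if h : i + 1 < n then (Equiv.swap ⟨i, by omega⟩ ⟨i + 1, h⟩).trans a else a

/-- `right_i`: move the entry at position `n-1` to position `i`, shifting the entries
at positions `i, …, n-2` one position to the right. -/
def rightMove (n i : ℕ) (a : Equiv.Perm (Fin n)) : Equiv.Perm (Fin n) :=
  if h : i + 1 < n then (cyc (⟨i, by omega⟩ : Fin n) ⟨n - 1, by omega⟩).trans a else a

/-- The pattern of moves performed between the recursive calls on a sublist of `m = n - i`
elements: one `left`, then `m - 3` times `right` (if `m` is even) or `left` (if `m` is odd),
and finally (when `m > 2`) one more `left`.  `true` codes `left`, `false` codes `right`. -/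
def movesList (m : ℕ) : List Bool :=
  true :: (List.replicate (m - 3) (if Even m then false else true) ++
    if 2 < m then [true] else [])

/-- The recursive generation procedure `gen(a, i)` (with an extra fuel argument making the
recursion structural; `fuel = n - i` always suffices, and `Gen` below uses fuel `n`).
If `i ≥ n - 1` it emits `[a]`; otherwise it first emits `gen(a, i+1)` (the "no-op" call)
and then, for each move prescribed by `movesList (n - i)`, applies that move at position `i`
to the last arrangement emitted so far and emits the generated list of the result. -/
def gen (n : ℕ) : ℕ → Equiv.Perm (Fin n) → ℕ → List (Equiv.Perm (Fin n))
  | 0, a, _ => [a]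
  | fuel + 1, a, i =>
      if i + 1 < n then
        (movesList (n - i)).foldl
          (fun acc b =>
            acc ++ gen n fuel
              ((if b then leftMove n i else rightMove n i) (acc.getLastD 1)) (i + 1))
          (gen n fuel a (i + 1))
      else [a]

/-- `Gen n = gen(id, 0)`: the full list of arrangements produced by the algorithm. -/
def Gen (n : ℕ) : List (Equiv.Perm (Fin n)) := gen n n 1 0


/-- The Kendall tau distance between two arrangements `σ τ : Fin n ≃ Fin n`
(where `σ j` is the entry at position `j`): the number of pairs of positions `p < q`
whose entries occur in the opposite relative order in the two arrangements, i.e. the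
number of inversions of `σ⁻¹ ∘ τ`. -/
def kendall {n : ℕ} (σ τ : Equiv.Perm (Fin n)) : ℕ :=
  ((Finset.univ : Finset (Fin n × Fin n)).filter
    (fun pq => pq.1 < pq.2 ∧ σ.symm (τ pq.2) < σ.symm (τ pq.1))).card

/-- `D 1 = 0` and, for `k ≥ 2`, `D k = k·D (k-1) + (k-3)·(k-1) + 2` if `k` is even and
`D k = k·D (k-1) + (k-1)` if `k` is odd (the value `D 0 = 0` is irrelevant junk). -/
def D : ℕ → ℤ
  | 0 => 0
  | 1 => 0
  | k + 2 =>
      if Even (k + 2) then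
        ((k : ℤ) + 2) * D (k + 1) + (((k : ℤ) + 2) - 3) * (((k : ℤ) + 2) - 1) + 2
      else
        ((k : ℤ) + 2) * D (k + 1) + (((k : ℤ) + 2) - 1)

/-!
Composing an arrangement with the cycle `cyc i j` costs Kendall distance `j - i`, whatever the
arrangement is, because the inversions of the cycle are the pairs `(i, q)` with `i < q ≤ j`. So on
a sublist of `m = n - i` elements a left move costs `1` and a right move costs `m - 1`.
Every list `gen a i` starts at `a`, so the length of the path it traces is the sum
of the lengths of its `m` recursive pieces and of the costs of the `m - 1` moves between them.
By induction this length depends on `m` only, and the costs of the moves are exactly the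
inhomogeneous term of the recurrence for `D`.
-/

section PathLength

variable {α β M : Type*} [AddMonoid M]

/-- The length of the path that visits the entries of `l` in order, where a step from `x` to `y`
has length `d x y`. -/
def pathLength (d : α → α → M) (l : List α) : M :=
  (l.zipWith d l.tail).sum

@[simp]
theorem pathLength_singleton (d : α → α → M) (a : α) : pathLength d [a] = 0 := rfl

theorem pathLength_cons_cons (d : α → α → M) (a b : α) (l : List α) :
    pathLength d (a :: b :: l) = d a b + pathLength d (b :: l) :=
  List.sum_cons

theorem pathLength_append (d : α → α → M) {l l' : List α} {x y : α}
    (hx : l.getLast? = some x) (hy : l'.head? = some y) :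
    pathLength d (l ++ l') = pathLength d l + d x y + pathLength d l' := by
  obtain ⟨t, rfl⟩ := List.head?_eq_some_iff.mp hy
  induction l with
  | nil => simp at hx
  | cons a l ih =>
    cases l with
    | nil =>
      obtain rfl : a = x := by simpa using hx
      simp [pathLength_cons_cons]
    | cons b l =>
      rw [List.getLast?_cons_cons] at hx
      simp only [List.cons_append, pathLength_cons_cons, add_assoc] at ih ⊢
      rw [ih hx]

theorem head?_foldl_append (f : List α → β → List α) (L : List β) {l : List α} {a : α}
    (hl : l.head? = some a) : (L.foldl (fun acc b => acc ++ f acc b) l).head? = some a := by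
  induction L generalizing l with
  | nil => exact hl
  | cons b _ ih => exact ih (by rw [List.head?_append, hl, Option.some_or])

theorem pathLength_foldl_append (d : α → α → M) (x₀ : α) {next : β → α → α} {g : α → List α}
    {cost : β → M} {c : M} (hhead : ∀ a, (g a).head? = some a)
    (hlen : ∀ a, pathLength d (g a) = c) (hcost : ∀ b a, d a (next b a) = cost b)
    (L : List β) {l : List α} (hl : l ≠ []) :
    pathLength d (L.foldl (fun acc b => acc ++ g (next b (acc.getLastD x₀))) l) =
      pathLength d l + (L.map fun b => cost b + c).sum := by
  induction L generalizing l with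
  | nil => simp
  | cons b L ih =>
    have hlast : l.getLast? = some (l.getLastD x₀) := by
      simp [List.getLast?_eq_some_getLast hl]
    rw [List.foldl_cons, ih (List.append_ne_nil_of_left_ne_nil hl _),
      pathLength_append d hlast (hhead _), hlen, hcost, List.map_cons, List.sum_cons]
    simp only [add_assoc]

end PathLength

section Moves

variable {n : ℕ}

theorem map_val_filter_finRange (i j : Fin n) :
    ((List.finRange n).filter fun p => decide (i ≤ p ∧ p ≤ j)).map Fin.val =
      List.Ico i (j + 1) := by
  have hfilter : (List.range n).filter (fun p => decide ((i : ℕ) ≤ p ∧ p < j + 1)) =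
      List.Ico i (j + 1) := by
    simp only [Bool.decide_and, ← List.filter_filter]
    rw [← List.Ico.zero_bot, List.Ico.filter_lt, List.Ico.filter_le]
    congr 1
    omega
  rw [← hfilter, ← List.map_coe_finRange_eq_range, List.filter_map]
  simp only [Function.comp_def, Fin.le_def, Nat.lt_succ_iff]

theorem val_cyc_apply (i j p : Fin n) :
    (cyc i j p : ℕ) = if p < i ∨ j < p then (p : ℕ) else if p = i then (j : ℕ) else p - 1 := by
  let l := ((List.finRange n).filter fun p => decide (i ≤ p ∧ p ≤ j)).reverse
  have hmap : l.map Fin.val = (List.Ico i (j + 1)).reverse := by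
    rw [List.map_reverse, map_val_filter_finRange]
  have hlen : l.length = j + 1 - i := by
    simpa using congrArg List.length hmap
  have hget (k : ℕ) (hk : k < l.length) : (l[k] : ℕ) = j - k := by
    rw [← List.getElem_map Fin.val (h := by simpa using hk)]
    simp only [hmap, List.Ico, List.getElem_reverse, List.getElem_range', List.length_range']
    omega
  have hnodup : l.Nodup := List.nodup_reverse.mpr ((List.nodup_finRange n).filter _)
  change (l.formPerm p : ℕ) = _
  split_ifs with hp hpi
  · rw [List.formPerm_apply_of_notMem]
    simpa [l, imp_iff_not_or] using hp
  all_goals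
    have hk : (j - p : ℕ) < l.length := by omega
    have hpk : l[(j - p : ℕ)] = p := Fin.ext (by rw [hget]; omega)
    have hnext := congrArg Fin.val (List.formPerm_apply_getElem l hnodup _ hk)
    rw [hpk, hget] at hnext
    rw [hnext]
  · have hwrap : (j - p + 1 : ℕ) = l.length := by omega
    rw [hwrap, Nat.mod_self, Nat.sub_zero]
  · rw [Nat.mod_eq_of_lt] <;> omega

theorem cyc_eq_swap {i j : Fin n} (hij : (j : ℕ) = i + 1) : cyc i j = Equiv.swap i j := by
  ext p
  rw [val_cyc_apply, Equiv.swap_apply_def]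
  split_ifs <;> omega

theorem kendall_cyc_trans (i j : Fin n) (a : Equiv.Perm (Fin n)) :
    kendall a ((cyc i j).trans a) = j - i := by
  have hinv : (Finset.univ.filter fun pq : Fin n × Fin n =>
      pq.1 < pq.2 ∧ cyc i j pq.2 < cyc i j pq.1) = {i} ×ˢ Finset.Ioc i j := by
    ext ⟨p, q⟩
    simp only [Finset.mem_filter_univ, Finset.mem_product, Finset.mem_singleton, Finset.mem_Ioc,
      Fin.lt_def (a := cyc i j q), val_cyc_apply]
    split_ifs <;> omega
  simp [kendall, hinv]

theorem kendall_leftMove {i : ℕ} (hi : i + 1 < n) (a : Equiv.Perm (Fin n)) :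
    kendall a (leftMove n i a) = 1 := by
  rw [leftMove, dif_pos hi, ← cyc_eq_swap rfl, kendall_cyc_trans, Nat.add_sub_cancel_left]

theorem kendall_rightMove {i : ℕ} (hi : i + 1 < n) (a : Equiv.Perm (Fin n)) :
    kendall a (rightMove n i a) = n - 1 - i := by
  rw [rightMove, dif_pos hi, kendall_cyc_trans]

/-- The Kendall distance covered by a left move (`true`) or a right move (`false`) on a sublist
of `m` elements. -/
def moveCost (m : ℕ) (b : Bool) : ℤ :=
  if b then 1 else m - 1

theorem kendall_move {i : ℕ} (hi : i + 1 < n) (b : Bool) (a : Equiv.Perm (Fin n)) :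
    (kendall a ((if b then leftMove n i else rightMove n i) a) : ℤ) = moveCost (n - i) b := by
  cases b
  · simp only [Bool.false_eq_true, if_false, kendall_rightMove hi, moveCost]
    omega
  · simp [kendall_leftMove hi, moveCost]

end Moves

section Recurrence

variable {m : ℕ}

theorem length_movesList (hm : 2 ≤ m) : (movesList m).length = m - 1 := by
  rw [movesList]
  split_ifs <;> grind

theorem sum_map_moveCost_movesList (hm : 2 ≤ m) :
    ((movesList m).map (moveCost m)).sum =
      if Even m then ((m : ℤ) - 3) * (m - 1) + 2 else (m : ℤ) - 1 := by
  obtain rfl | hm : m = 2 ∨ 3 ≤ m := by omega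
  · simp [movesList, moveCost]
  · have hm' : 2 < m := hm
    by_cases heven : Even m
    all_goals
      simp only [movesList, moveCost, hm', heven, if_true, if_false, Bool.false_eq_true,
        List.map_cons, List.map_append, List.map_replicate, List.map_nil, List.sum_cons,
        List.sum_append, List.sum_replicate, List.sum_nil, nsmul_eq_mul, Nat.cast_sub hm]
      push_cast
      ring

theorem D_eq (hm : 2 ≤ m) :
    D m = m * D (m - 1) + if Even m then ((m : ℤ) - 3) * (m - 1) + 2 else (m : ℤ) - 1 := by
  obtain ⟨k, rfl⟩ := Nat.exists_eq_add_of_le' hm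
  rw [D]
  split_ifs <;> push_cast <;> simp [add_assoc]

theorem D_eq_add_sum_map_movesList (hm : 2 ≤ m) :
    D m = D (m - 1) + ((movesList m).map fun b => moveCost m b + D (m - 1)).sum := by
  rw [List.sum_map_add, List.map_const', List.sum_replicate, length_movesList hm,
    sum_map_moveCost_movesList hm, D_eq hm, nsmul_eq_mul, Nat.cast_sub (by omega)]
  push_cast
  ring

end Recurrence

theorem head?_gen (n fuel : ℕ) (a : Equiv.Perm (Fin n)) (i : ℕ) :
    (gen n fuel a i).head? = some a := by
  induction fuel generalizing a i with
  | zero => rfl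
  | succ fuel ih =>
    rw [gen]
    split_ifs
    · exact head?_foldl_append _ _ (ih a (i + 1))
    · rfl

theorem pathLength_gen (n fuel : ℕ) (a : Equiv.Perm (Fin n)) (i : ℕ) (hfuel : n - i ≤ fuel) :
    pathLength (fun σ τ => (kendall σ τ : ℤ)) (gen n fuel a i) = D (n - i) := by
  induction fuel generalizing a i with
  | zero =>
    rw [Nat.le_zero.mp hfuel]
    rfl
  | succ fuel ih =>
    rw [gen]
    split_ifs with hi
    · have hlen (b : Equiv.Perm (Fin n)) := ih b (i + 1) (by omega)
      have hne : gen n fuel a (i + 1) ≠ [] := fun h => by simpa [h] using head?_gen n fuel a (i + 1)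
      rw [pathLength_foldl_append _ 1 (fun b => head?_gen n fuel b (i + 1)) hlen
        (kendall_move hi) _ hne, hlen, ← Nat.sub_sub, ← D_eq_add_sum_map_movesList (by omega)]
    · obtain h | h : n - i = 0 ∨ n - i = 1 := by omega
      all_goals rw [h]; rfl

/-- The sum of the Kendall tau distances between consecutive entries of `Gen n`
equals `D n`. -/
theorem sum_kendall_gen (n : ℕ) (hn : 1 ≤ n) :
    ((Gen n).zipWith (fun σ τ => (kendall σ τ : ℤ)) (Gen n).tail).sum = D n := by
  exact pathLength_gen n n 1 0 (Nat.sub_le n 0)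
end

section
/- For n ≥ 2, order the n! arrangements of Fin n lexicographically (σ < τ iff at the first position p where they differ, σ(p) < τ(p)), and let S(n) be the sum of the Kendall tau distances between consecutive arrangements in this lexicographic order. Then S(n)/(n! − 1) converges to 2 as n → ∞. -/
/-- The lexicographic (strict) order on arrangements: `σ < τ` iff at the first
position where they differ, the entry of `σ` is smaller than that of `τ`. -/
def lexLT {n : ℕ} (σ τ : Equiv.Perm (Fin n)) : Prop :=
  ∃ p : Fin n, σ p < τ p ∧ ∀ q : Fin n, q < p → σ q = τ q

instance {n : ℕ} (σ τ : Equiv.Perm (Fin n)) : Decidable (lexLT σ τ) :=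
  inferInstanceAs (Decidable (∃ p : Fin n, σ p < τ p ∧ ∀ q : Fin n, q < p → σ q = τ q))

/-- `S n`: the sum of the Kendall tau distances between consecutive arrangements of
`Fin n` in lexicographic order, expressed as the sum, over all pairs `(σ, τ)` where `τ`
is the immediate lexicographic successor of `σ`, of the distance `kendall σ τ`. -/
def S (n : ℕ) : ℕ :=
  ∑ σ : Equiv.Perm (Fin n), ∑ τ : Equiv.Perm (Fin n),
    if lexLT σ τ ∧ ∀ ρ : Equiv.Perm (Fin n), lexLT σ ρ → ¬ lexLT ρ τ then kendall σ τ
    else 0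

/-!
Fixing the first entry identifies the lexicographic order on arrangements of `Fin (n + 1)` with the
lexicographic product of `Fin (n + 1)` and the arrangements of `Fin n`, so a consecutive pair either
lies in one of the `n + 1` blocks with constant first entry, where the distance is that of the
tails, or consists of the last arrangement of a block, with decreasing tail, and the first of the
next, with increasing tail.

In the latter case, write the quotient of the two arrangements as a first entry `r + 1` followed by
the reversal composed with a cycle of length `r + 1`. By the Lehmer code, the first entry accounts
for `r + 1` inversions; the tail has `n.choose 2 - r`, since reversing a permutation complements its
set of inversions and the cycle has `r`. The distance is thus `n.choose 2 + 1` for each `r`, so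
`S (n + 1) = (n + 1) * S n + n * (n.choose 2 + 1)`, which is solved by
`S n = 2 * n! - n.choose 2 - 2`.
-/

open Equiv Finset Filter Topology

section Covering

open Classical in
/-- The sum of `f x y` over all covering pairs `x ⋖ y`, i.e. over the pairs of consecutive
elements when the order is linear. -/
noncomputable def sumCovBy {α M : Type*} [Fintype α] [LT α] [AddCommMonoid M]
    (f : α → α → M) : M :=
  ∑ x, ∑ y, if x ⋖ y then f x y else 0

variable {α β M : Type*} [AddCommMonoid M]

theorem sumCovBy_orderIso [Fintype α] [Fintype β] [Preorder α] [Preorder β] (e : α ≃o β)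
    (f : β → β → M) : sumCovBy f = sumCovBy fun x y => f (e x) (e y) := by
  classical
  simp only [sumCovBy, ← e.toEquiv.sum_comp, RelIso.coe_fn_toEquiv, apply_covBy_apply_iff]

theorem sumCovBy_fin {n : ℕ} (f : Fin (n + 1) → Fin (n + 1) → M) :
    sumCovBy f = ∑ i : Fin n, f i.castSucc i.succ := by
  classical
  have covBy_iff_eq (i : Fin n) (b : Fin (n + 1)) : i.castSucc ⋖ b ↔ i.succ = b := by
    simp [Fin.ext_iff]
  have not_covBy (b : Fin (n + 1)) : ¬ Fin.last n ⋖ b := fun h => (Fin.le_last b).not_gt h.lt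
  rw [sumCovBy, Fin.sum_univ_castSucc]
  simp [covBy_iff_eq, not_covBy, -Fin.covBy_iff]

theorem sumCovBy_prodLex [Fintype α] [Preorder α] [Fintype β] [PartialOrder β] [BoundedOrder β]
    (f : α ×ₗ β → α ×ₗ β → M) :
    sumCovBy f = (∑ a, sumCovBy fun b c => f (toLex (a, b)) (toLex (a, c))) +
      sumCovBy fun a b => f (toLex (a, ⊤)) (toLex (b, ⊥)) := by
  classical
  have split_covBy (a b : α) (c d : β) :
      (if toLex (a, c) ⋖ toLex (b, d) then f (toLex (a, c)) (toLex (b, d)) else 0) =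
        (if a = b then if c ⋖ d then f (toLex (a, c)) (toLex (b, d)) else 0 else 0) +
        if c = ⊤ then if d = ⊥ then if a ⋖ b then f (toLex (a, c)) (toLex (b, d)) else 0 else 0
        else 0 := by
    simp only [Prod.Lex.toLex_covBy_toLex_iff, isMax_iff_eq_top, isMin_iff_eq_bot]
    rcases eq_or_ne a b with rfl | hab
    · simp
    · simp only [hab, false_and, false_or, if_false, zero_add, ← ite_and]
      exact if_congr (by tauto) rfl rfl
  simp only [sumCovBy, ← toLex.sum_comp, Fintype.sum_prod_type, split_covBy, sum_add_distrib]
  congr 1 <;> simp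

end Covering

section Inversions

variable {α : Type*} [Fintype α] [LinearOrder α]

/-- The number of inversions of a permutation: of pairs `x < y` whose images are in the opposite
order. -/
def inversions (σ : Perm α) : ℕ :=
  #{p : α × α | p.1 < p.2 ∧ σ p.2 < σ p.1}

theorem inversions_one : inversions (1 : Perm α) = 0 :=
  card_eq_zero.2 <| filter_eq_empty_iff.2 fun _ _ h => h.1.asymm h.2

theorem inversions_inv (σ : Perm α) : inversions σ⁻¹ = inversions σ :=
  card_equiv ((Equiv.prodComm α α).trans (Equiv.prodCongr σ⁻¹ σ⁻¹)) (by simp [and_comm])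

variable (α) in
theorem card_filter_fst_lt_snd : #{p : α × α | p.1 < p.2} = (Fintype.card α).choose 2 := by
  have card_gt : #{p : α × α | p.2 < p.1} = #{p : α × α | p.1 < p.2} :=
    card_equiv (Equiv.prodComm α α) (by simp)
  have card_ne : #{p : α × α | p.1 < p.2} + #{p : α × α | p.2 < p.1} =
      #(univ : Finset α).offDiag := by
    rw [← card_union_of_disjoint (disjoint_filter.2 fun p _ h => h.not_gt), ← filter_or]
    congr 1
    ext p
    simp
  rw [card_gt, offDiag_card, card_univ, ← Nat.mul_sub_one] at card_ne
  rw [Nat.choose_two_right]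
  omega

theorem inversions_mul_of_strictAnti {ρ : Perm α} (hρ : StrictAnti ρ) (σ : Perm α) :
    inversions (ρ * σ) + inversions σ = (Fintype.card α).choose 2 := by
  rw [← card_filter_fst_lt_snd, ← card_filter_add_card_filter_not (fun p : α × α => σ p.1 < σ p.2),
    filter_filter, filter_filter, inversions, inversions]
  congr 2 <;> ext p
  · simp [hρ.lt_iff_gt]
  · simp only [mem_filter_univ, not_lt, and_congr_right_iff]
    exact fun h => (σ.injective.ne h.ne').le_iff_lt.symm

theorem kendall_eq_inversions {n : ℕ} (σ τ : Perm (Fin n)) : kendall σ τ = inversions (σ⁻¹ * τ) :=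
  rfl

end Inversions

section ConsPerm

variable {n : ℕ}

/-- The arrangement with first entry `a` whose other entries are in the same relative order as those
of `σ`: `Perm.decomposeFin.symm (0, σ)` prepends `0`, and `a.cycleRange⁻¹` moves `0` to `a` while
preserving the order of the other values. -/
def consPerm (a : Fin (n + 1)) (σ : Perm (Fin n)) : Perm (Fin (n + 1)) :=
  a.cycleRange⁻¹ * Perm.decomposeFin.symm (0, σ)

@[simp]
theorem consPerm_zero (a : Fin (n + 1)) (σ : Perm (Fin n)) : consPerm a σ 0 = a := by
  simp [consPerm, Perm.inv_def]

@[simp]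
theorem consPerm_succ (a : Fin (n + 1)) (σ : Perm (Fin n)) (i : Fin n) :
    consPerm a σ i.succ = a.succAbove (σ i) := by
  simp [consPerm, Perm.inv_def]

theorem consPerm_one_right (a : Fin (n + 1)) : consPerm a 1 = a.cycleRange⁻¹ := by
  ext i : 1
  cases i using Fin.cases <;> simp [Perm.inv_def]

theorem consPerm_mul_consPerm_zero (a : Fin (n + 1)) (σ τ : Perm (Fin n)) :
    consPerm a σ * consPerm 0 τ = consPerm a (σ * τ) := by
  ext i : 1
  cases i using Fin.cases <;> simp

theorem inversions_consPerm (a : Fin (n + 1)) (σ : Perm (Fin n)) :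
    inversions (consPerm a σ) = a + inversions σ := by
  have card_lt_head : #{i | a.succAbove (σ i) < a} = (a : ℕ) := by
    calc #{i | a.succAbove (σ i) < a} = #{i : Fin n | (i : ℕ) < a} :=
          card_equiv σ fun i => by
            rw [mem_filter_univ, mem_filter_univ, Fin.succAbove_lt_iff_castSucc_lt, Fin.lt_def,
              Fin.val_castSucc]
      _ = a := by rw [Fin.card_filter_val_lt, min_eq_right a.is_le]
  simp only [inversions, card_filter, Fintype.sum_prod_type, Fin.sum_univ_succ] at card_lt_head ⊢
  simp [card_lt_head]

theorem inversions_cycleRange (a : Fin n) : inversions a.cycleRange = a := by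
  cases n with
  | zero => exact a.elim0
  | succ n =>
    rw [← inversions_inv, ← consPerm_one_right, inversions_consPerm, inversions_one, add_zero]

theorem kendall_consPerm_self (a : Fin (n + 1)) (σ τ : Perm (Fin n)) :
    kendall (consPerm a σ) (consPerm a τ) = kendall σ τ := by
  have quotient : consPerm a τ = consPerm a σ * consPerm 0 (σ⁻¹ * τ) := by
    simp [consPerm_mul_consPerm_zero]
  rw [kendall_eq_inversions, quotient, inv_mul_cancel_left, inversions_consPerm,
    kendall_eq_inversions, Fin.val_zero, zero_add]

theorem succAbove_castSucc_eq_succAbove_succ {a i : Fin n} (h : i ≠ a) :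
    a.castSucc.succAbove i = a.succ.succAbove i := by
  rcases h.lt_or_gt with h | h
  · rw [Fin.succAbove_castSucc_of_lt _ _ h, Fin.succAbove_succ_of_le _ _ h.le]
  · rw [Fin.succAbove_castSucc_of_le _ _ h.le, Fin.succAbove_succ_of_lt _ _ h]

theorem consPerm_castSucc_revPerm_mul (a : Fin n) :
    consPerm a.castSucc Fin.revPerm * consPerm a.rev.succ (a.rev.cycleRange * Fin.revPerm) =
      consPerm a.succ 1 := by
  ext i : 1
  cases i using Fin.cases with
  | zero => simp
  | succ i =>
    rcases eq_or_ne i a with rfl | hia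
    · simp [Fin.succAbove_cycleRange]
    · have swap_fixes : swap 0 a.rev.succ i.rev.succ = i.rev.succ :=
        swap_apply_of_ne_of_ne (Fin.succ_ne_zero _) (by simpa using hia)
      simp [Fin.succAbove_cycleRange, swap_fixes, succAbove_castSucc_eq_succAbove_succ hia]

theorem inversions_cycleRange_mul_revPerm (a : Fin n) :
    inversions (a.cycleRange * Fin.revPerm) + a = n.choose 2 :=
  calc inversions (a.cycleRange * Fin.revPerm) + a
      = inversions (Fin.revPerm * a.cycleRange⁻¹) + inversions a.cycleRange⁻¹ := by
        have revPerm_inv : (Fin.revPerm : Perm (Fin n))⁻¹ = Fin.revPerm := rfl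
        rw [← inversions_inv, mul_inv_rev, revPerm_inv, inversions_inv a.cycleRange,
          inversions_cycleRange]
    _ = n.choose 2 := by
        rw [inversions_mul_of_strictAnti Fin.rev_strictAnti, Fintype.card_fin]

theorem kendall_consPerm_castSucc_succ (a : Fin n) :
    kendall (consPerm a.castSucc Fin.revPerm) (consPerm a.succ 1) = n.choose 2 + 1 := by
  rw [kendall_eq_inversions, ← consPerm_castSucc_revPerm_mul, inv_mul_cancel_left,
    inversions_consPerm, Fin.val_succ, ← inversions_cycleRange_mul_revPerm a.rev]
  ring

end ConsPerm

section LexOrder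

variable {n : ℕ}

/-- The lexicographic linear order on arrangements, pulled back from `Lex (Fin n → Fin n)`. -/
noncomputable abbrev lexLinearOrder (n : ℕ) : LinearOrder (Perm (Fin n)) :=
  LinearOrder.lift' (fun σ => toLex ⇑σ) (toLex.injective.comp DFunLike.coe_injective)

attribute [local instance] lexLinearOrder

theorem lexLT_iff_lt {σ τ : Perm (Fin n)} : lexLT σ τ ↔ σ < τ :=
  exists_congr fun _ => and_comm

theorem one_le_perm (σ : Perm (Fin n)) : 1 ≤ σ := by
  refine not_lt.1 ?_
  rintro ⟨p, agree, hp⟩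
  exact hp.ne (σ.injective (agree (σ p) hp))

theorem lt_of_revPerm_mul_lt {σ τ : Perm (Fin n)} (h : Fin.revPerm * σ < Fin.revPerm * τ) :
    τ < σ := by
  obtain ⟨p, agree, hp⟩ := h
  exact ⟨p, fun q hq => (Fin.rev_injective (agree q hq)).symm, Fin.rev_lt_rev.1 hp⟩

theorem perm_le_revPerm (σ : Perm (Fin n)) : σ ≤ Fin.revPerm := by
  refine not_lt.1 fun h => (one_le_perm (Fin.revPerm * σ)).not_gt (lt_of_revPerm_mul_lt ?_)
  have revPerm_mul_cancel : Fin.revPerm * (Fin.revPerm * σ) = σ := by ext; simp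
  rwa [revPerm_mul_cancel, mul_one]

/-- The least arrangement is the increasing one, and the greatest is the decreasing one. -/
noncomputable abbrev lexBoundedOrder (n : ℕ) : BoundedOrder (Perm (Fin n)) where
  top := Fin.revPerm
  le_top σ := perm_le_revPerm σ
  bot := 1
  bot_le σ := one_le_perm σ

attribute [local instance] lexBoundedOrder

theorem consPerm_strictMono :
    StrictMono fun x : Fin (n + 1) ×ₗ Perm (Fin n) => consPerm (ofLex x).1 (ofLex x).2 := by
  intro x y h
  obtain hab | ⟨hab, p, agree, hp⟩ := Prod.Lex.lt_iff.1 h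
  · exact ⟨0, fun q hq => absurd hq (Fin.not_lt_zero q), by simpa using hab⟩
  · refine ⟨p.succ, fun q hq => ?_, by simpa [hab] using hp⟩
    cases q using Fin.cases with
    | zero => simpa using hab
    | succ q => simpa [hab] using agree q (Fin.succ_lt_succ_iff.1 hq)

/-- Splitting off the first entry identifies the lexicographic order on arrangements of
`Fin (n + 1)` with a lexicographic product. -/
noncomputable def consPermOrderIso (n : ℕ) :
    Fin (n + 1) ×ₗ Perm (Fin n) ≃o Perm (Fin (n + 1)) :=
  consPerm_strictMono.orderIsoOfSurjective _ <|
    ((Fintype.bijective_iff_injective_and_card _).2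
      ⟨consPerm_strictMono.injective, by
        simp [Fintype.card_lex, Fintype.card_perm, Nat.factorial_succ]⟩).surjective

theorem consPermOrderIso_toLex (a : Fin (n + 1)) (σ : Perm (Fin n)) :
    consPermOrderIso n (toLex (a, σ)) = consPerm a σ :=
  rfl

theorem S_eq_sumCovBy (n : ℕ) : S n = sumCovBy (kendall (n := n)) := by
  classical
  refine sum_congr rfl fun σ _ => sum_congr rfl fun τ _ => if_congr ?_ rfl rfl
  simp only [lexLT_iff_lt, CovBy]

theorem S_zero : S 0 = 0 := by
  simp [S, kendall]

theorem S_succ (n : ℕ) : S (n + 1) = (n + 1) * S n + n * (n.choose 2 + 1) := by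
  calc S (n + 1) = sumCovBy fun x y => kendall (consPermOrderIso n x) (consPermOrderIso n y) := by
        rw [S_eq_sumCovBy, sumCovBy_orderIso (consPermOrderIso n)]
    _ = (∑ a, sumCovBy fun σ τ => kendall (consPerm a σ) (consPerm a τ)) +
          ∑ a : Fin n, kendall (consPerm a.castSucc Fin.revPerm) (consPerm a.succ 1) := by
        simp only [sumCovBy_prodLex, sumCovBy_fin, consPermOrderIso_toLex]
        rfl
    _ = (n + 1) * S n + n * (n.choose 2 + 1) := by
        simp [kendall_consPerm_self, kendall_consPerm_castSucc_succ, S_eq_sumCovBy]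

theorem S_add_choose_two_add_two (n : ℕ) : S n + n.choose 2 + 2 = 2 * n.factorial := by
  induction n with
  | zero => simp [S_zero]
  | succ n ih =>
    have pascal : (n + 1).choose 2 = n + n.choose 2 := by simp [Nat.choose_succ_succ]
    rw [S_succ, Nat.factorial_succ]
    linear_combination (n + 1) * ih + pascal

end LexOrder

theorem tendsto_choose_div_factorial (k : ℕ) :
    Tendsto (fun n : ℕ => (n.choose k : ℝ) / n.factorial) atTop (𝓝 0) := by
  refine squeeze_zero (fun n => by positivity) (fun n => ?_)
    (FloorSemiring.tendsto_pow_div_factorial_atTop (2 : ℝ))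
  gcongr
  exact_mod_cast n.choose_le_two_pow k

/-- `S n / (n! - 1)` converges to `2` as `n → ∞`. -/
theorem tendsto_average_kendall_lex :
    Filter.Tendsto (fun n : ℕ => (S n : ℝ) / ((n.factorial : ℝ) - 1))
      Filter.atTop (nhds 2) := by
  have inv_factorial : Tendsto (fun n : ℕ => 1 / (n.factorial : ℝ)) atTop (𝓝 0) := by
    simpa using tendsto_choose_div_factorial 0
  have normalized : Tendsto (fun n : ℕ => (S n : ℝ) / n.factorial) atTop (𝓝 2) := by
    have limit := ((tendsto_choose_div_factorial 2).const_sub 2).sub (inv_factorial.const_mul 2)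
    rw [mul_zero, sub_zero, sub_zero] at limit
    refine limit.congr fun n => ?_
    have closed_form : (S n : ℝ) + n.choose 2 + 2 = 2 * n.factorial :=
      mod_cast S_add_choose_two_add_two n
    field_simp
    linarith
  have quotient := normalized.div (inv_factorial.const_sub 1) (by norm_num)
  rw [sub_zero, div_one] at quotient
  refine quotient.congr fun n => ?_
  have factorial_ne_zero : (n.factorial : ℝ) ≠ 0 := mod_cast n.factorial_ne_zero
  rw [Pi.div_apply, one_sub_div factorial_ne_zero, div_div_div_cancel_right₀ factorial_ne_zero]
end
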